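/- arXiv:1101.1995 — 2 statements merged into one kernel-verified Lean document; each statement's English description precedes it below -/
import Mathlib

section
/- Let m ≥ 1 and N ≥ 1 be integers, let a < b be real numbers, set θ = (b−a)/N, and let f : ℝ → ℝ be (2m+2)-times continuously differentiable on [a,b]. Then there exists ξ ∈ (a,b) such that ∫_a^b f(x) dx = (θ/2)[f(a) + 2∑_{k=1}^{N−1} f(a+kθ) + f(b)] − ∑_{l=1}^{m} (B_{2l}/(2l)!) θ^{2l} (f^{(2l−1)}(b) − f^{(2l−1)}(a)) − (B_{2m+2}/(2m+2)!) N θ^{2m+3} f^{(2m+2)}(ξ), where B_k denotes the k-th Bernoulli number. -/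
/-!
On `[0, 1]`, repeated integration by parts against the Bernoulli polynomials expresses the error of
the trapezoidal rule through the boundary values of the odd derivatives; choosing
`B_{2m+2}(x) - B_{2m+2}` as the last antiderivative makes the final boundary terms vanish. In the
cosine series of `B_{2k}(x)` all coefficients have the same sign, so `B_{2k}(x) - B_{2k}` has
constant sign on `[0, 1]` and the mean value theorem for integrals turns the remaining integral into
a value of the `(2m+2)`-nd derivative.

For `N` cells this is applied once, to the sum `g t = ∑ k < N, f (a + (k + t) θ)`, rather than to
each cell separately: the differences `g⁽ʲ⁾ 1 - g⁽ʲ⁾ 0` telescope, and `g⁽²ᵐ⁺²⁾ t` is, up to the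
factor `θ ^ (2m+2)`, a sum of `N` values of the continuous function `f⁽²ᵐ⁺²⁾`, hence `N` times a
single value.
-/

open MeasureTheory Set
open scoped Finset Interval Nat

section Calculus

variable {𝕜 F : Type*} [NontriviallyNormedField 𝕜] [NormedAddCommGroup F] [NormedSpace 𝕜 F]

theorem hasDerivWithinAt_iteratedDerivWithin {s : Set 𝕜} {f : 𝕜 → F} {n : WithTop ℕ∞} {j : ℕ}
    {x : 𝕜} (hf : ContDiffOn 𝕜 n f s) (hs : UniqueDiffOn 𝕜 s) (hj : j < n) (hx : x ∈ s) :
    HasDerivWithinAt (iteratedDerivWithin j f s) (iteratedDerivWithin (j + 1) f s x) s x := by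
  rw [iteratedDerivWithin_succ]
  exact (hf.differentiableOn_iteratedDerivWithin hj hs x hx).hasDerivWithinAt

theorem iteratedDerivWithin_comp_const_add_mul {s t : Set 𝕜} {f : 𝕜 → F} {n : ℕ} {c d x : 𝕜}
    (hs : UniqueDiffOn 𝕜 s) (ht : UniqueDiffOn 𝕜 t) (hf : ContDiffOn 𝕜 n f t)
    (hst : MapsTo (fun x ↦ d + c * x) s t) (hx : x ∈ s) :
    iteratedDerivWithin n (fun x ↦ f (d + c * x)) s x =
      c ^ n • iteratedDerivWithin n f t (d + c * x) := by
  induction n generalizing x with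
  | zero => simp
  | succ n ih =>
    have hderiv := hasDerivWithinAt_iteratedDerivWithin hf ht (mod_cast n.lt_succ_self) (hst hx)
    have haffine : HasDerivWithinAt (fun x ↦ d + c * x) c s x := by
      simpa using ((hasDerivWithinAt_id x s).const_mul c).const_add d
    rw [iteratedDerivWithin_succ,
      derivWithin_congr (fun y hy ↦ ih hf.of_succ hy) (ih hf.of_succ hx), pow_succ, mul_smul]
    exact ((hderiv.scomp x haffine hst).const_smul (c ^ n)).derivWithin (hs x hx)

theorem exists_sum_eq_card_mul_of_continuousOn {α ι : Type*} [TopologicalSpace α] {s : Set α}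
    {f : α → ℝ} {t : Finset ι} {x : ι → α} (hs : IsPreconnected s) (hf : ContinuousOn f s)
    (ht : t.Nonempty) (hx : ∀ i ∈ t, x i ∈ s) :
    ∃ ξ ∈ s, ∑ i ∈ t, f (x i) = #t * f ξ := by
  have hconv : Convex ℝ (f '' s) := (hs.image f hf).ordConnected.convex
  have hmean : ∑ i ∈ t, (#t : ℝ)⁻¹ • f (x i) ∈ f '' s :=
    hconv.sum_mem (fun _ _ ↦ by positivity) (by simp [ht.card_ne_zero])
      fun i hi ↦ mem_image_of_mem f (hx i hi)
  obtain ⟨ξ, hξ, hfξ⟩ := hmean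
  refine ⟨ξ, hξ, ?_⟩
  rw [hfξ, ← Finset.smul_sum, smul_eq_mul, mul_inv_cancel_left₀ (by simp [ht.ne_empty])]

theorem exists_mem_Ioo_eq_const_mul_intervalIntegral_of_nonneg {a b : ℝ} {f g : ℝ → ℝ}
    (hab : a < b) (hf : ContinuousOn f (Icc a b)) (hg : IntervalIntegrable g volume a b)
    (hg_nonneg : ∀ x ∈ Ioo a b, 0 ≤ g x) :
    ∃ c ∈ Ioo a b, ∫ x in a..b, f x * g x = f c * ∫ x in a..b, g x := by
  have hfg : IntervalIntegrable (fun x ↦ f x * g x) volume a b :=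
    hg.continuousOn_mul (by rwa [uIcc_of_le hab.le])
  rw [intervalIntegrable_iff_integrableOn_Ioo_of_le hab.le] at hg hfg
  simpa only [intervalIntegral.integral_of_le hab.le, integral_Ioc_eq_integral_Ioo] using
    exists_eq_const_mul_setIntegral_of_nonneg (isConnected_Ioo hab) measurableSet_Ioo
      (hf.mono Ioo_subset_Icc_self) hg hfg hg_nonneg

end Calculus

section UnitInterval

theorem neg_one_pow_mul_bernoulliFun_two_mul_le (k : ℕ) {x : ℝ} (hx : x ∈ Icc (0 : ℝ) 1) :
    (-1) ^ (k + 1) * bernoulliFun (2 * k) x ≤ (-1) ^ (k + 1) * (bernoulli (2 * k) : ℝ) := by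
  rcases eq_or_ne k 0 with rfl | hk
  · simp
  have hsum_x := hasSum_one_div_nat_pow_mul_cos hk hx
  have hsum_zero := hasSum_one_div_nat_pow_mul_cos hk (left_mem_Icc.2 zero_le_one)
  have hcos_le (n : ℕ) : 1 / (n : ℝ) ^ (2 * k) * Real.cos (2 * Real.pi * n * x) ≤
      1 / (n : ℝ) ^ (2 * k) * Real.cos (2 * Real.pi * n * 0) := by
    rw [mul_zero, Real.cos_zero]
    gcongr
    exact Real.cos_le_one _
  have hscale : (0 : ℝ) < (2 * Real.pi) ^ (2 * k) / 2 / (2 * k)! := by positivity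
  rw [← bernoulliFun_eval_zero, ← mul_le_mul_iff_right₀ hscale]
  convert! hasSum_le hcos_le hsum_x hsum_zero using 1 <;> rw [bernoulliFun] <;> ring

theorem exists_integral_bernoulliFun_sub_bernoulli_mul_eq {k : ℕ} (hk : k ≠ 0) {f : ℝ → ℝ}
    (hf : ContinuousOn f (Icc 0 1)) :
    ∃ t ∈ Ioo (0 : ℝ) 1, ∫ x in 0..1, (bernoulliFun (2 * k) x - bernoulli (2 * k)) * f x =
      -bernoulli (2 * k) * f t := by
  set s : ℝ := (-1) ^ k
  have hint : IntervalIntegrable (fun x ↦ s * (bernoulliFun (2 * k) x - bernoulli (2 * k)))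
      volume 0 1 :=
    (((continuous_bernoulliFun _).sub continuous_const).const_mul s).intervalIntegrable 0 1
  have hnonneg (x : ℝ) (hx : x ∈ Ioo (0 : ℝ) 1) :
      0 ≤ s * (bernoulliFun (2 * k) x - bernoulli (2 * k)) := by
    have := neg_one_pow_mul_bernoulliFun_two_mul_le k (Ioo_subset_Icc_self hx)
    rw [pow_succ] at this
    linarith
  obtain ⟨t, ht, hmean⟩ :=
    exists_mem_Ioo_eq_const_mul_intervalIntegral_of_nonneg zero_lt_one hf hint hnonneg
  refine ⟨t, ht, mul_left_cancel₀ (pow_ne_zero k (by simp) : s ≠ 0) ?_⟩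
  have hweight : ∫ x in 0..1, (bernoulliFun (2 * k) x - bernoulli (2 * k)) =
      -(bernoulli (2 * k) : ℝ) := by
    rw [intervalIntegral.integral_sub (intervalIntegrable_bernoulliFun _ _ _)
      intervalIntegrable_const, integral_bernoulliFun_eq_zero (by positivity)]
    simp
  rw [intervalIntegral.integral_const_mul, hweight] at hmean
  rw [← intervalIntegral.integral_const_mul]
  convert hmean using 1
  · congr! 2
    ring
  · ring

variable {E : Type*} [NormedAddCommGroup E] [NormedSpace ℝ E] [CompleteSpace E]

theorem integral_bernoulliFun_smul_eq {a b : ℝ} {g g' : ℝ → E}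
    (hg : ∀ x ∈ [[a, b]], HasDerivWithinAt g (g' x) [[a, b]] x)
    (hg' : IntervalIntegrable g' volume a b) (n : ℕ) (c : ℝ) :
    (n ! : ℝ)⁻¹ • ∫ x in a..b, bernoulliFun n x • g x =
      ((n + 1)! : ℝ)⁻¹ • ((bernoulliFun (n + 1) b - c) • g b - (bernoulliFun (n + 1) a - c) • g a -
        ∫ x in a..b, (bernoulliFun (n + 1) x - c) • g' x) := by
  have hB (x : ℝ) : HasDerivAt (fun x ↦ bernoulliFun (n + 1) x - c)
      ((n + 1 : ℝ) * bernoulliFun n x) x := by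
    simpa using (hasDerivAt_bernoulliFun (n + 1) x).sub_const c
  have hparts := intervalIntegral.integral_smul_deriv_eq_deriv_smul_of_hasDerivWithinAt
    (fun x _ ↦ (hB x).hasDerivWithinAt) hg
    (((continuous_bernoulliFun n).const_mul _).intervalIntegrable a b) hg'
  simp only [mul_smul, intervalIntegral.integral_smul] at hparts
  rw [hparts, sub_sub_cancel, smul_smul, Nat.factorial_succ]
  congr 1
  push_cast
  field_simp

theorem integral_bernoulliFun_smul_iteratedDerivWithin {f : ℝ → E} {n : ℕ}
    (hf : ContDiffOn ℝ (n + 1) f (Icc 0 1)) (c : ℝ) :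
    (n ! : ℝ)⁻¹ • ∫ x in 0..1, bernoulliFun n x • iteratedDerivWithin n f (Icc 0 1) x =
      ((n + 1)! : ℝ)⁻¹ • ((bernoulliFun (n + 1) 1 - c) • iteratedDerivWithin n f (Icc 0 1) 1 -
        (bernoulliFun (n + 1) 0 - c) • iteratedDerivWithin n f (Icc 0 1) 0 -
        ∫ x in 0..1, (bernoulliFun (n + 1) x - c) • iteratedDerivWithin (n + 1) f (Icc 0 1) x) := by
  have hu : UniqueDiffOn ℝ (Icc (0 : ℝ) 1) := uniqueDiffOn_Icc zero_lt_one
  refine integral_bernoulliFun_smul_eq (fun x hx ↦ ?_) ?_ n c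
  · rw [uIcc_of_le zero_le_one] at hx ⊢
    exact hasDerivWithinAt_iteratedDerivWithin hf hu (mod_cast n.lt_succ_self) hx
  · exact (hf.continuousOn_iteratedDerivWithin (mod_cast le_rfl) hu).intervalIntegrable_of_Icc
      zero_le_one

theorem integral_bernoulliFun_smul_iteratedDerivWithin_of_ne_zero {f : ℝ → E} {n : ℕ} (hn : n ≠ 0)
    (hf : ContDiffOn ℝ (n + 1) f (Icc 0 1)) (c : ℝ) :
    (n ! : ℝ)⁻¹ • ∫ x in 0..1, bernoulliFun n x • iteratedDerivWithin n f (Icc 0 1) x =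
      ((n + 1)! : ℝ)⁻¹ • ((bernoulli (n + 1) - c) •
          (iteratedDerivWithin n f (Icc 0 1) 1 - iteratedDerivWithin n f (Icc 0 1) 0) -
        ∫ x in 0..1, (bernoulliFun (n + 1) x - c) • iteratedDerivWithin (n + 1) f (Icc 0 1) x) := by
  rw [integral_bernoulliFun_smul_iteratedDerivWithin hf c,
    bernoulliFun_endpoints_eq_of_ne_one (by lia), bernoulliFun_eval_zero, smul_sub (_ - c)]

theorem integral_bernoulliFun_smul_iteratedDerivWithin_odd {f : ℝ → E} {m : ℕ}
    (hf : ContDiffOn ℝ (2 * m + 3 : ℕ) f (Icc 0 1)) :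
    ((2 * m + 1)! : ℝ)⁻¹ • ∫ x in 0..1,
        bernoulliFun (2 * m + 1) x • iteratedDerivWithin (2 * m + 1) f (Icc 0 1) x =
      ((bernoulli (2 * m + 2) : ℝ) / (2 * m + 2)!) •
          (iteratedDerivWithin (2 * m + 1) f (Icc 0 1) 1 -
            iteratedDerivWithin (2 * m + 1) f (Icc 0 1) 0) +
        ((2 * m + 3)! : ℝ)⁻¹ • ∫ x in 0..1,
          bernoulliFun (2 * m + 3) x • iteratedDerivWithin (2 * m + 3) f (Icc 0 1) x := by
  have hodd := integral_bernoulliFun_smul_iteratedDerivWithin_of_ne_zero (n := 2 * m + 1)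
    (by lia) (hf.of_le (by norm_cast; lia)) 0
  have heven := integral_bernoulliFun_smul_iteratedDerivWithin_of_ne_zero (n := 2 * m + 2)
    (by lia) (mod_cast hf) 0
  have hB : bernoulli (2 * m + 2 + 1) = 0 := bernoulli_eq_zero_of_odd (by grind) (by lia)
  simp only [hB, sub_zero, Rat.cast_zero, zero_smul, zero_sub, smul_neg] at hodd heven
  rw [hodd, smul_sub, heven, sub_neg_eq_add, smul_smul, inv_mul_eq_div]

theorem integral_eq_trapezoid_sub_sum_sub_integral_bernoulliFun_odd {f : ℝ → E} {m : ℕ}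
    (hf : ContDiffOn ℝ (2 * m + 1 : ℕ) f (Icc 0 1)) :
    ∫ x in 0..1, f x = (2 : ℝ)⁻¹ • (f 0 + f 1) -
      ∑ l ∈ Finset.Icc 1 m, ((bernoulli (2 * l) : ℝ) / (2 * l)!) •
        (iteratedDerivWithin (2 * l - 1) f (Icc 0 1) 1 -
          iteratedDerivWithin (2 * l - 1) f (Icc 0 1) 0) -
      ((2 * m + 1)! : ℝ)⁻¹ • ∫ x in 0..1,
        bernoulliFun (2 * m + 1) x • iteratedDerivWithin (2 * m + 1) f (Icc 0 1) x := by
  induction m with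
  | zero =>
    have h := integral_bernoulliFun_smul_iteratedDerivWithin (n := 0) (mod_cast hf) 0
    simp only [bernoulliFun_zero, bernoulliFun_one, iteratedDerivWithin_zero, one_smul,
      zero_add, Nat.factorial_zero, Nat.factorial_one, Nat.cast_one, inv_one, sub_zero] at h
    simp only [h, bernoulliFun_one, mul_zero, zero_add, Nat.factorial_one, Nat.cast_one, inv_one,
      one_smul, Finset.Icc_eq_empty_of_lt zero_lt_one, Finset.sum_empty]
    module
  | succ m ih =>
    rw [ih (hf.of_le (by norm_cast; lia)), integral_bernoulliFun_smul_iteratedDerivWithin_odd hf,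
      Finset.sum_Icc_succ_top (by lia), ← sub_sub, ← sub_sub]
    rfl

theorem integral_eq_trapezoid_sub_sum_add_integral_bernoulliFun_sub {f : ℝ → E} {m : ℕ}
    (hf : ContDiffOn ℝ (2 * m + 2 : ℕ) f (Icc 0 1)) :
    ∫ x in 0..1, f x = (2 : ℝ)⁻¹ • (f 0 + f 1) -
      ∑ l ∈ Finset.Icc 1 m, ((bernoulli (2 * l) : ℝ) / (2 * l)!) •
        (iteratedDerivWithin (2 * l - 1) f (Icc 0 1) 1 -
          iteratedDerivWithin (2 * l - 1) f (Icc 0 1) 0) +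
      ((2 * m + 2)! : ℝ)⁻¹ • ∫ x in 0..1,
        (bernoulliFun (2 * m + 2) x - bernoulli (2 * m + 2)) •
          iteratedDerivWithin (2 * m + 2) f (Icc 0 1) x := by
  rw [integral_eq_trapezoid_sub_sum_sub_integral_bernoulliFun_odd
      (hf.of_le (mod_cast (2 * m + 1).le_succ)),
    integral_bernoulliFun_smul_iteratedDerivWithin_of_ne_zero (2 * m).succ_ne_zero (mod_cast hf)
      (bernoulli (2 * m + 2)),
    sub_self, zero_smul, zero_sub, smul_neg, sub_neg_eq_add]

theorem exists_integral_eq_trapezoid_sub_sum_sub_iteratedDerivWithin {f : ℝ → ℝ} {m : ℕ}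
    (hf : ContDiffOn ℝ (2 * m + 2 : ℕ) f (Icc 0 1)) :
    ∃ t ∈ Ioo (0 : ℝ) 1, ∫ x in 0..1, f x = (f 0 + f 1) / 2 -
      ∑ l ∈ Finset.Icc 1 m, (bernoulli (2 * l) : ℝ) / (2 * l)! *
        (iteratedDerivWithin (2 * l - 1) f (Icc 0 1) 1 -
          iteratedDerivWithin (2 * l - 1) f (Icc 0 1) 0) -
      (bernoulli (2 * m + 2) : ℝ) / (2 * m + 2)! *
        iteratedDerivWithin (2 * m + 2) f (Icc 0 1) t := by
  obtain ⟨t, ht, hmean⟩ := exists_integral_bernoulliFun_sub_bernoulli_mul_eq m.succ_ne_zero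
    (hf.continuousOn_iteratedDerivWithin le_rfl (uniqueDiffOn_Icc zero_lt_one))
  refine ⟨t, ht, ?_⟩
  rw [integral_eq_trapezoid_sub_sum_add_integral_bernoulliFun_sub hf]
  simp only [smul_eq_mul, Nat.succ_eq_add_one, mul_add_one] at hmean ⊢
  rw [hmean]
  ring

end UnitInterval

section Grid

theorem add_mul_add_mul_mem_Icc {a θ : ℝ} {N k : ℕ} (hθ : 0 ≤ θ) (hk : k < N) {t : ℝ}
    (ht : t ∈ Icc (0 : ℝ) 1) :
    a + k * θ + θ * t ∈ Icc a (a + N * θ) := by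
  have hkN : (k : ℝ) + 1 ≤ N := mod_cast hk
  constructor
  · have := ht.1
    rw [add_assoc]
    exact le_add_of_nonneg_right (by positivity)
  · calc
      a + k * θ + θ * t ≤ a + k * θ + θ * 1 := by gcongr; exact ht.2
      _ = a + (k + 1) * θ := by ring
      _ ≤ a + N * θ := by gcongr

theorem add_mul_add_mul_mem_Ioo {a θ : ℝ} {N k : ℕ} (hθ : 0 < θ) (hk : k < N) {t : ℝ}
    (ht : t ∈ Ioo (0 : ℝ) 1) :
    a + k * θ + θ * t ∈ Ioo a (a + N * θ) := by
  have hkN : (k : ℝ) + 1 ≤ N := mod_cast hk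
  constructor
  · have := ht.1
    rw [add_assoc]
    exact lt_add_of_pos_right a (by positivity)
  · calc
      a + k * θ + θ * t < a + k * θ + θ * 1 := by gcongr; exact ht.2
      _ = a + (k + 1) * θ := by ring
      _ ≤ a + N * θ := by gcongr

/-- The sum of the values of `f` at the points lying at relative position `t` in each of the `N`
consecutive cells of length `θ` starting at `a`, that is, at the points `a + (k + t) θ`. -/
def gridSum {M : Type*} [AddCommMonoid M] (f : ℝ → M) (a θ : ℝ) (N : ℕ) (t : ℝ) : M :=
  ∑ k ∈ Finset.range N, f (a + k * θ + θ * t)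

theorem gridSum_zero {M : Type*} [AddCommMonoid M] {f : ℝ → M} {a θ : ℝ} {N : ℕ} (hN : 1 ≤ N) :
    gridSum f a θ N 0 = f a + ∑ k ∈ Finset.Icc 1 (N - 1), f (a + k * θ) := by
  rw [gridSum, Finset.range_eq_Ico, Finset.sum_eq_sum_Ico_succ_bot hN,
    ← Finset.Ico_add_one_right_eq_Icc, Nat.sub_add_cancel hN]
  simp

theorem gridSum_one_sub_gridSum_zero {G : Type*} [AddCommGroup G] {f : ℝ → G} {a θ : ℝ} {N : ℕ} :
    gridSum f a θ N 1 - gridSum f a θ N 0 = f (a + N * θ) - f a := by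
  have htelescope := Finset.sum_range_sub (fun k : ℕ ↦ f (a + k * θ)) N
  simp only [Nat.cast_add_one, Nat.cast_zero, zero_mul, add_zero] at htelescope
  rw [gridSum, gridSum, ← Finset.sum_sub_distrib, ← htelescope]
  simp only [mul_one, mul_zero, add_zero, add_one_mul, add_assoc]

theorem gridSum_zero_add_gridSum_one {G : Type*} [AddCommGroup G] {f : ℝ → G} {a θ : ℝ} {N : ℕ}
    (hN : 1 ≤ N) :
    gridSum f a θ N 0 + gridSum f a θ N 1 =
      f a + 2 • ∑ k ∈ Finset.Icc 1 (N - 1), f (a + k * θ) + f (a + N * θ) := by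
  rw [eq_add_of_sub_eq gridSum_one_sub_gridSum_zero, gridSum_zero hN]
  abel

variable {E : Type*} [NormedAddCommGroup E] [NormedSpace ℝ E] {f : ℝ → E} {a θ : ℝ} {N : ℕ}

theorem contDiffOn_gridSum {n : WithTop ℕ∞} (hθ : 0 ≤ θ)
    (hf : ContDiffOn ℝ n f (Icc a (a + N * θ))) :
    ContDiffOn ℝ n (gridSum f a θ N) (Icc 0 1) :=
  ContDiffOn.sum fun _ hk ↦ hf.comp (by fun_prop)
    fun _ ht ↦ add_mul_add_mul_mem_Icc hθ (Finset.mem_range.1 hk) ht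

theorem iteratedDerivWithin_gridSum {n : ℕ} (hθ : 0 < θ)
    (hf : ContDiffOn ℝ n f (Icc a (a + N * θ))) {t : ℝ} (ht : t ∈ Icc (0 : ℝ) 1) :
    iteratedDerivWithin n (gridSum f a θ N) (Icc 0 1) t =
      θ ^ n • gridSum (iteratedDerivWithin n f (Icc a (a + N * θ))) a θ N t := by
  have hu : UniqueDiffOn ℝ (Icc (0 : ℝ) 1) := uniqueDiffOn_Icc zero_lt_one
  have hmaps (k : ℕ) (hk : k ∈ Finset.range N) :
      MapsTo (fun t ↦ a + k * θ + θ * t) (Icc 0 1) (Icc a (a + N * θ)) :=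
    fun t ht ↦ add_mul_add_mul_mem_Icc hθ.le (Finset.mem_range.1 hk) ht
  have hcell (k : ℕ) (hk : k ∈ Finset.range N) :
      ContDiffWithinAt ℝ n (fun t ↦ f (a + k * θ + θ * t)) (Icc 0 1) t :=
    hf.comp (by fun_prop) (hmaps k hk) t ht
  unfold gridSum
  rw [iteratedDerivWithin_fun_sum ht hu hcell, Finset.smul_sum]
  refine Finset.sum_congr rfl fun k hk ↦ ?_
  have hN : (0 : ℝ) < N := mod_cast k.zero_le.trans_lt (Finset.mem_range.1 hk)
  exact iteratedDerivWithin_comp_const_add_mul hu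
    (uniqueDiffOn_Icc (lt_add_of_pos_right a (by positivity))) hf (hmaps k hk) ht

theorem iteratedDerivWithin_gridSum_one_sub_zero {n : ℕ} (hθ : 0 < θ)
    (hf : ContDiffOn ℝ n f (Icc a (a + N * θ))) :
    iteratedDerivWithin n (gridSum f a θ N) (Icc 0 1) 1 -
        iteratedDerivWithin n (gridSum f a θ N) (Icc 0 1) 0 =
      θ ^ n • (iteratedDerivWithin n f (Icc a (a + N * θ)) (a + N * θ) -
        iteratedDerivWithin n f (Icc a (a + N * θ)) a) := by
  rw [iteratedDerivWithin_gridSum hθ hf (right_mem_Icc.2 zero_le_one),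
    iteratedDerivWithin_gridSum hθ hf (left_mem_Icc.2 zero_le_one), ← smul_sub,
    gridSum_one_sub_gridSum_zero]

theorem smul_sum_smul_iteratedDerivWithin_gridSum_one_sub_zero {m : ℕ} (c : ℕ → ℝ) (hθ : 0 < θ)
    (hf : ContDiffOn ℝ (2 * m - 1 : ℕ) f (Icc a (a + N * θ))) :
    θ • ∑ l ∈ Finset.Icc 1 m, c l • (iteratedDerivWithin (2 * l - 1) (gridSum f a θ N) (Icc 0 1) 1 -
        iteratedDerivWithin (2 * l - 1) (gridSum f a θ N) (Icc 0 1) 0) =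
      ∑ l ∈ Finset.Icc 1 m, (c l * θ ^ (2 * l)) •
        (iteratedDerivWithin (2 * l - 1) f (Icc a (a + N * θ)) (a + N * θ) -
          iteratedDerivWithin (2 * l - 1) f (Icc a (a + N * θ)) a) := by
  rw [Finset.smul_sum]
  refine Finset.sum_congr rfl fun l hl ↦ ?_
  obtain ⟨hl_pos, hlm⟩ := Finset.mem_Icc.1 hl
  have hle : 2 * l - 1 ≤ 2 * m - 1 := by lia
  rw [iteratedDerivWithin_gridSum_one_sub_zero hθ (hf.of_le (Nat.cast_le.2 hle)), smul_smul,
    smul_smul, ← mul_pow_sub_one (n := 2 * l) (by lia) θ]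
  congr 1
  ring

theorem smul_integral_gridSum (hθ : 0 ≤ θ) (hf : ContinuousOn f (Icc a (a + N * θ))) :
    θ • ∫ t in 0..1, gridSum f a θ N t = ∫ x in a..a + N * θ, f x := by
  set p : ℕ → ℝ := fun k ↦ a + k * θ
  have hmaps (k : ℕ) (hk : k < N) : MapsTo (fun t ↦ p k + θ * t) (Icc 0 1) (Icc a (a + N * θ)) :=
    fun _ ht ↦ add_mul_add_mul_mem_Icc hθ hk ht
  have hcell (k : ℕ) :
      θ • ∫ t in 0..1, f (p k + θ * t) = ∫ x in p k..p (k + 1), f x := by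
    rw [intervalIntegral.smul_integral_comp_add_mul]
    simp [p, add_one_mul, add_assoc]
  have hint (k : ℕ) (hk : k < N) : IntervalIntegrable f volume (p k) (p (k + 1)) := by
    refine (hf.mono (uIcc_subset_Icc ?_ ?_)).intervalIntegrable
    · simpa using hmaps k hk (left_mem_Icc.2 zero_le_one)
    · simpa [p, add_one_mul, add_assoc] using hmaps k hk (right_mem_Icc.2 zero_le_one)
  have hint_comp (k : ℕ) (hk : k ∈ Finset.range N) :
      IntervalIntegrable (fun t ↦ f (p k + θ * t)) volume 0 1 :=
    (hf.comp (by fun_prop) (hmaps k (Finset.mem_range.1 hk))).intervalIntegrable_of_Icc zero_le_one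
  unfold gridSum
  rw [intervalIntegral.integral_finsetSum hint_comp, Finset.smul_sum,
    Finset.sum_congr rfl fun k _ ↦ hcell k, intervalIntegral.sum_integral_adjacent_intervals hint]
  simp [p]

theorem exists_gridSum_eq_mul {f : ℝ → ℝ} (hθ : 0 < θ) (hN : 1 ≤ N)
    (hf : ContinuousOn f (Ioo a (a + N * θ))) {t : ℝ} (ht : t ∈ Ioo (0 : ℝ) 1) :
    ∃ ξ ∈ Ioo a (a + N * θ), gridSum f a θ N t = N * f ξ := by
  simpa [gridSum] using exists_sum_eq_card_mul_of_continuousOn isPreconnected_Ioo hf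
    (Finset.nonempty_range_iff.2 (Nat.one_le_iff_ne_zero.1 hN))
    fun k hk ↦ add_mul_add_mul_mem_Ioo hθ (Finset.mem_range.1 hk) ht

end Grid

/-- **Euler–Maclaurin quadrature formula with remainder.**
For integers `m ≥ 1`, `N ≥ 1`, reals `a < b`, `θ = (b - a)/N`, and `f` a `(2m+2)`-times
continuously differentiable function on `[a, b]`, there exists `ξ ∈ (a, b)` such that
`∫_a^b f = (θ/2)(f a + 2 ∑_{k=1}^{N-1} f (a + kθ) + f b)
  - ∑_{l=1}^m (B_{2l}/(2l)!) θ^{2l} (f^{(2l-1)}(b) - f^{(2l-1)}(a))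
  - (B_{2m+2}/(2m+2)!) N θ^{2m+3} f^{(2m+2)}(ξ)`. -/
theorem euler_maclaurin_quadrature
    (m N : ℕ) (hm : 1 ≤ m) (hN : 1 ≤ N) (a b : ℝ) (hab : a < b)
    (f : ℝ → ℝ) (hf : ContDiffOn ℝ ((2 * m + 2 : ℕ) : ℕ∞) f (Set.Icc a b)) :
    ∃ ξ ∈ Set.Ioo a b,
      ∫ x in a..b, f x =
        ((b - a) / N) / 2 *
            (f a + 2 * ∑ k ∈ Finset.Icc 1 (N - 1), f (a + k * ((b - a) / N)) + f b)
          - ∑ l ∈ Finset.Icc 1 m,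
              (bernoulli (2 * l) : ℝ) / (Nat.factorial (2 * l)) * ((b - a) / N) ^ (2 * l) *
                (iteratedDerivWithin (2 * l - 1) f (Set.Icc a b) b -
                  iteratedDerivWithin (2 * l - 1) f (Set.Icc a b) a)
          - (bernoulli (2 * m + 2) : ℝ) / (Nat.factorial (2 * m + 2)) * N *
              ((b - a) / N) ^ (2 * m + 3) *
              iteratedDerivWithin (2 * m + 2) f (Set.Icc a b) ξ := by
  obtain ⟨θ, rfl⟩ : ∃ θ, b = a + N * θ := ⟨(b - a) / N, by field_simp; ring⟩
  have hN_pos : (0 : ℝ) < N := mod_cast hN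
  have hθ : 0 < θ := by simpa [hN_pos] using hab
  simp only [add_sub_cancel_left, mul_div_cancel_left₀ θ hN_pos.ne']
  have hcont := hf.continuousOn_iteratedDerivWithin le_rfl (uniqueDiffOn_Icc hab)
  obtain ⟨t, ht, hcell⟩ := exists_integral_eq_trapezoid_sub_sum_sub_iteratedDerivWithin
    (contDiffOn_gridSum hθ.le hf)
  obtain ⟨ξ, hξ, hmean⟩ := exists_gridSum_eq_mul hθ hN (hcont.mono Ioo_subset_Icc_self) ht
  refine ⟨ξ, hξ, ?_⟩
  have hsum := smul_sum_smul_iteratedDerivWithin_gridSum_one_sub_zero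
    (fun l ↦ (bernoulli (2 * l) : ℝ) / (2 * l)!) hθ (m := m) (hf.of_le (Nat.cast_le.2 (by lia)))
  simp only [smul_eq_mul] at hsum
  rw [← smul_integral_gridSum hθ.le hf.continuousOn, hcell, gridSum_zero_add_gridSum_one hN,
    iteratedDerivWithin_gridSum hθ hf (Ioo_subset_Icc_self ht), hmean, smul_eq_mul, mul_sub,
    mul_sub, hsum]
  simp only [smul_eq_mul, nsmul_eq_mul, Nat.cast_ofNat]
  ring
end

section
/- Let n ≥ 3 be an integer, let V : ℝ → ℝ be infinitely differentiable with all derivatives bounded on ℝ, let μ > 0, and consider the Lagrangian L(x,v) = (1/2) μ v² − V(x), whose Euler–Lagrange equation is μ q̈ = −V'(q), i.e. q̈ = f(q) with f = −V'/μ. Let q : ℝ → ℝ be an infinitely differentiable solution of q̈ = f(q) all of whose derivatives are bounded on ℝ. Suppose that for each h ∈ (0,1] there is a real polynomial q_d^h of degree at most 2n−1 with q_d^h(0) = q(0), q_d^h(h) = q(h), and satisfying the prolongation-collocation conditions (q_d^h)^{(j)}(τ) = F_j(q_d^h(τ), (q̇_d^h)(τ)) for j = 2,…,n and τ ∈ {0,h},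 and suppose there is a constant K > 0, independent of h, such that |(q_d^h)^{(j)}(τ) − q^{(j)}(τ)| ≤ K h^{2n−1} for all j = 1,…,n, τ ∈ {0,h}, and h ∈ (0,1]. Define the prolongation-collocation discrete Lagrangian L_d(h) = (h/2)[ L(q_d^h(0), q̇_d^h(0)) + L(q_d^h(h), q̇_d^h(h)) ] − ∑_{l=1}^{⌊n/2⌋} (B_{2l}/(2l)!) h^{2l} [ (d^{2l−1}/dt^{2l−1}) L(q_d^h(t), q̇_d^h(t)) |_{t=h} − (d^{2l−1}/dt^{2l−1}) L(q_d^h(t), q̇_d^h(t)) |_{t=0} ]. Then there exist constants C > 0 and h₀ ∈ (0,1] such that for all 0 < h ≤ h₀, | L_d(h) − ∫_0^h L(q(t), q̇(t)) dt | ≤ C h^{2⌊n/2⌋ + 3}; that is, L_d approximates the exact discrete Lagrangian L_d^E(q(0), q(h), h) = ∫_0^h L(q(t), q̇(t)) dt to order h^{2⌊n/2⌋+3}. -/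
/-- The prolongation functions of `f : ℝ → ℝ`: `prolong f k` represents `F_{k+2}`, defined
recursively by `F_2 (x, v) = f x` and
`F_{j+1} (x, v) = v ∂F_j/∂x (x, v) + f x ∂F_j/∂v (x, v)`. -/
noncomputable def prolong (f : ℝ → ℝ) : ℕ → ℝ → ℝ → ℝ
  | 0, x, _ => f x
  | (k + 1), x, v =>
      v * deriv (fun y => prolong f k y v) x + f x * deriv (fun w => prolong f k x w) v

/-- The Lagrangian `L(x, v) = (1/2) μ v² - V(x)` evaluated along the polynomial curve `P`,
as a function of time: `t ↦ L(P(t), Ṗ(t))`. -/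
noncomputable def lagrangianAlong (μ : ℝ) (V : ℝ → ℝ) (P : Polynomial ℝ) (t : ℝ) : ℝ :=
  1 / 2 * μ * ((Polynomial.derivative P).eval t) ^ 2 - V (P.eval t)

/-- The prolongation-collocation discrete Lagrangian built from the degree-`(2n-1)` Hermite
prolongation-collocation polynomial `qd h` and the `⌊n/2⌋`-term Euler–Maclaurin quadrature. -/
noncomputable def discreteLagrangianEM (n : ℕ) (μ : ℝ) (V : ℝ → ℝ)
    (qd : ℝ → Polynomial ℝ) (h : ℝ) : ℝ :=
  h / 2 * (lagrangianAlong μ V (qd h) 0 + lagrangianAlong μ V (qd h) h) -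
    ∑ l ∈ Finset.Icc 1 (n / 2),
      (bernoulli (2 * l) : ℝ) / (Nat.factorial (2 * l)) * h ^ (2 * l) *
        (iteratedDeriv (2 * l - 1) (lagrangianAlong μ V (qd h)) h -
          iteratedDeriv (2 * l - 1) (lagrangianAlong μ V (qd h)) 0)

/-!
The action integrand along a curve `c` is `L ∘ (c, ċ)`. The error of the discrete Lagrangian
splits into the Euler–Maclaurin quadrature error for the exact curve, which is `O(h ^ (2m + 3))`
with `m = ⌊n/2⌋`, and the effect of replacing the exact curve by the collocation polynomial.
For the latter, the rule only samples derivatives of the integrand of order at most `2m - 1` at the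
endpoints, and these depend on the jets of the curve in a Lipschitz way on bounded sets: since
`(G ∘ c)' = dG ∘ (c, ċ)`, differentiating the composite amounts to lifting the curve, so the
chain rule can be iterated without ever expanding it. As every term of the rule carries a factor
`h`, endpoint errors `O(h ^ (2n - 1))` contribute `O(h ^ (2n))`, and `2n ≥ 2m + 3` for `n ≥ 3`.
-/

section EulerMaclaurin

variable {F : Type*} [NormedAddCommGroup F] [NormedSpace ℝ F]

/-- The Euler–Maclaurin quadrature rule for `∫ t in 0..h, g t` on a single panel: the trapezoidal
rule corrected by the first `m` Bernoulli terms. -/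
noncomputable def eulerMaclaurin (m : ℕ) (g : ℝ → F) (h : ℝ) : F :=
  (h / 2) • (g 0 + g h) -
    ∑ l ∈ Finset.Icc 1 m, ((bernoulli (2 * l) : ℝ) / Nat.factorial (2 * l) * h ^ (2 * l)) •
      (iteratedDeriv (2 * l - 1) g h - iteratedDeriv (2 * l - 1) g 0)

theorem eulerMaclaurin_eq_smul_comp_mul_left {g : ℝ → F} (m : ℕ)
    (hg : ContDiff ℝ (2 * m) g) (h : ℝ) :
    eulerMaclaurin m g h = h • eulerMaclaurin m (fun t => g (h * t)) 1 := by
  simp only [eulerMaclaurin, smul_sub, Finset.smul_sum, smul_smul]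
  congr 1
  · simp [div_eq_mul_inv]
  refine Finset.sum_congr rfl fun l hl => ?_
  obtain ⟨hl₁, hlm⟩ := Finset.mem_Icc.mp hl
  have hpow : h ^ (2 * l) = h * h ^ (2 * l - 1) := by rw [← pow_succ']; congr; omega
  rw [iteratedDeriv_comp_const_smul (hg.of_le (by norm_cast; omega)), hpow]
  simp only [mul_one, mul_zero, one_pow]
  module

theorem norm_eulerMaclaurin_sub_eulerMaclaurin_le {g₁ g₂ : ℝ → F} (m : ℕ) {h ε : ℝ}
    (hh : h ∈ Set.Icc (0 : ℝ) 1)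
    (hε : ∀ k ≤ 2 * m - 1, ∀ τ ∈ ({0, h} : Set ℝ),
      ‖iteratedDeriv k g₁ τ - iteratedDeriv k g₂ τ‖ ≤ ε) :
    ‖eulerMaclaurin m g₁ h - eulerMaclaurin m g₂ h‖ ≤
      (1 + ∑ l ∈ Finset.Icc 1 m, |(bernoulli (2 * l) : ℝ) / Nat.factorial (2 * l)| * 2) *
        (h * ε) := by
  have hvalue : ‖(h / 2) • (g₁ 0 + g₁ h) - (h / 2) • (g₂ 0 + g₂ h)‖ ≤ h * ε := by
    rw [← smul_sub, add_sub_add_comm, norm_smul, Real.norm_of_nonneg (div_nonneg hh.1 zero_le_two)]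
    calc h / 2 * ‖g₁ 0 - g₂ 0 + (g₁ h - g₂ h)‖ ≤ h / 2 * (ε + ε) := by
          gcongr
          · exact div_nonneg hh.1 zero_le_two
          · exact norm_add_le_of_le (by simpa using hε 0 (by omega) 0 (by simp))
              (by simpa using hε 0 (by omega) h (by simp))
      _ = h * ε := by ring
  have hterm : ∀ l ∈ Finset.Icc 1 m,
      ‖((bernoulli (2 * l) : ℝ) / Nat.factorial (2 * l) * h ^ (2 * l)) •
          (iteratedDeriv (2 * l - 1) g₁ h - iteratedDeriv (2 * l - 1) g₁ 0) -
        ((bernoulli (2 * l) : ℝ) / Nat.factorial (2 * l) * h ^ (2 * l)) •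
          (iteratedDeriv (2 * l - 1) g₂ h - iteratedDeriv (2 * l - 1) g₂ 0)‖ ≤
        |(bernoulli (2 * l) : ℝ) / Nat.factorial (2 * l)| * 2 * (h * ε) := by
    intro l hl
    obtain ⟨hl₁, hlm⟩ := Finset.mem_Icc.mp hl
    rw [← smul_sub, sub_sub_sub_comm, norm_smul, Real.norm_eq_abs, abs_mul,
      abs_of_nonneg (pow_nonneg hh.1 _)]
    calc _ ≤ |(bernoulli (2 * l) : ℝ) / Nat.factorial (2 * l)| * h * (ε + ε) := by
          gcongr
          · exact mul_nonneg (abs_nonneg _) hh.1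
          · exact pow_le_of_le_one hh.1 hh.2 (by omega)
          · exact norm_sub_le_of_le (hε _ (by omega) h (by simp)) (hε _ (by omega) 0 (by simp))
      _ = _ := by ring
  rw [eulerMaclaurin, eulerMaclaurin, sub_sub_sub_comm, ← Finset.sum_sub_distrib, add_mul, one_mul,
    Finset.sum_mul]
  exact norm_sub_le_of_le hvalue (norm_sum_le_of_le _ hterm)

/-- The error term `∫₀¹ B_k(t)/k! g⁽ᵏ⁾(t) dt` of the Euler–Maclaurin formula on the unit
interval. -/
noncomputable def eulerMaclaurinRemainder (k : ℕ) (g : ℝ → F) : F :=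
  ∫ t in (0 : ℝ)..1, (bernoulliFun k t / Nat.factorial k) • iteratedDeriv k g t

theorem hasDerivAt_bernoulliFun_sub_div_factorial (k : ℕ) (c t : ℝ) :
    HasDerivAt (fun s => (bernoulliFun (k + 1) s - c) / Nat.factorial (k + 1))
      (bernoulliFun k t / Nat.factorial k) t := by
  convert! ((hasDerivAt_bernoulliFun (k + 1) t).sub_const c).div_const
    (Nat.factorial (k + 1) : ℝ) using 1
  rw [Nat.factorial_succ, Nat.add_sub_cancel]
  push_cast
  exact (mul_div_mul_left _ _ (by positivity)).symm

theorem hasDerivAt_iteratedDeriv {g : ℝ → F} {k : ℕ} (hg : ContDiff ℝ (k + 1) g)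
    (t : ℝ) : HasDerivAt (iteratedDeriv k g) (iteratedDeriv (k + 1) g t) t := by
  rw [iteratedDeriv_succ]
  exact (hg.differentiable_iteratedDeriv' k t).hasDerivAt

variable [CompleteSpace F]

theorem eulerMaclaurinRemainder_eq_sub_integral {g : ℝ → F} {k : ℕ}
    (hg : ContDiff ℝ (k + 1) g) (c : ℝ) :
    eulerMaclaurinRemainder k g =
      ((bernoulliFun (k + 1) 1 - c) / Nat.factorial (k + 1)) • iteratedDeriv k g 1 -
        ((bernoulliFun (k + 1) 0 - c) / Nat.factorial (k + 1)) • iteratedDeriv k g 0 -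
        ∫ t in (0 : ℝ)..1, ((bernoulliFun (k + 1) t - c) / Nat.factorial (k + 1)) •
          iteratedDeriv (k + 1) g t := by
  rw [intervalIntegral.integral_smul_deriv_eq_deriv_smul
    (fun t _ => hasDerivAt_bernoulliFun_sub_div_factorial k c t)
    (fun t _ => hasDerivAt_iteratedDeriv hg t)
    (((continuous_bernoulliFun k).div_const _).intervalIntegrable _ _)
    ((hg.continuous_iteratedDeriv' (k + 1)).intervalIntegrable _ _), sub_sub_cancel]
  rfl

theorem eulerMaclaurinRemainder_zero {g : ℝ → F} (hg : ContDiff ℝ 1 g) :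
    eulerMaclaurinRemainder 0 g =
      (1 / 2 : ℝ) • (g 0 + g 1) - eulerMaclaurinRemainder 1 g := by
  rw [eulerMaclaurinRemainder_eq_sub_integral (k := 0) (by simpa using hg) 0]
  simp only [eulerMaclaurinRemainder, zero_add, bernoulliFun_one, iteratedDeriv_zero, sub_zero,
    Nat.factorial_one, Nat.cast_one, div_one]
  module

theorem eulerMaclaurinRemainder_eq_smul_sub {g : ℝ → F} {k : ℕ} (hk : k ≠ 0)
    (hg : ContDiff ℝ (k + 1) g) :
    eulerMaclaurinRemainder k g =
      ((bernoulli (k + 1) : ℝ) / Nat.factorial (k + 1)) •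
        (iteratedDeriv k g 1 - iteratedDeriv k g 0) - eulerMaclaurinRemainder (k + 1) g := by
  rw [eulerMaclaurinRemainder_eq_sub_integral hg 0,
    bernoulliFun_endpoints_eq_of_ne_one (by omega), bernoulliFun_eval_zero]
  simp only [sub_zero, smul_sub, eulerMaclaurinRemainder]

theorem eulerMaclaurin_one_sub_integral {g : ℝ → F} (m : ℕ)
    (hg : ContDiff ℝ (2 * m + 1) g) :
    eulerMaclaurin m g 1 - ∫ t in (0 : ℝ)..1, g t = eulerMaclaurinRemainder (2 * m + 1) g := by
  induction m with
  | zero =>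
    have hint : eulerMaclaurinRemainder 0 g = ∫ t in (0 : ℝ)..1, g t := by
      simp [eulerMaclaurinRemainder]
    rw [← hint, eulerMaclaurinRemainder_zero (by simpa using hg)]
    simp [eulerMaclaurin]
  | succ m ih =>
    have hodd := eulerMaclaurinRemainder_eq_smul_sub (k := 2 * m + 1) (by omega)
      (hg.of_le (by norm_cast; omega))
    have heven := eulerMaclaurinRemainder_eq_smul_sub (k := 2 * m + 2) (by omega)
      (hg.of_le (by norm_cast))
    rw [bernoulli_eq_zero_of_odd ⟨m + 1, by ring⟩ (by omega)] at heven
    have hsucc : eulerMaclaurin (m + 1) g 1 = eulerMaclaurin m g 1 -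
        ((bernoulli (2 * m + 2) : ℝ) / Nat.factorial (2 * m + 2)) •
          (iteratedDeriv (2 * m + 1) g 1 - iteratedDeriv (2 * m + 1) g 0) := by
      simp only [eulerMaclaurin, Finset.sum_Icc_succ_top (Nat.le_add_left 1 m), one_pow, mul_one,
        sub_sub]
      rfl
    rw [hsucc, sub_right_comm, ih (hg.of_le (by norm_cast; omega)), hodd, heven]
    simp only [Rat.cast_zero, zero_div, zero_smul]
    module

theorem exists_norm_eulerMaclaurinRemainder_le {k : ℕ} (hk : k ≠ 0) :
    ∃ C, 0 ≤ C ∧ ∀ {g : ℝ → F}, ContDiff ℝ (k + 1) g → ∀ {M : ℝ},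
      (∀ t ∈ Set.Icc (0 : ℝ) 1, ‖iteratedDeriv (k + 1) g t‖ ≤ M) →
        ‖eulerMaclaurinRemainder k g‖ ≤ C * M := by
  obtain ⟨C, hC⟩ := isCompact_Icc.exists_bound_of_continuousOn (s := Set.Icc (0 : ℝ) 1)
    (((continuous_bernoulliFun (k + 1)).sub continuous_const).div_const
      (Nat.factorial (k + 1) : ℝ)).continuousOn (f := fun t =>
      (bernoulliFun (k + 1) t - bernoulliFun (k + 1) 0) / Nat.factorial (k + 1))
  have hC₀ : 0 ≤ C := (norm_nonneg _).trans (hC 0 (by simp))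
  refine ⟨C, hC₀, fun {g} hg {M} hM => ?_⟩
  -- Subtracting the common endpoint value of `B_{k+1}` removes the boundary terms.
  rw [eulerMaclaurinRemainder_eq_sub_integral hg (bernoulliFun (k + 1) 0),
    bernoulliFun_endpoints_eq_of_ne_one (by omega)]
  simp only [sub_self, zero_div, zero_smul, zero_sub, norm_neg]
  have hbound := intervalIntegral.norm_integral_le_of_norm_le_const (a := 0) (b := 1)
    (f := fun t => ((bernoulliFun (k + 1) t - bernoulliFun (k + 1) 0) /
      Nat.factorial (k + 1)) • iteratedDeriv (k + 1) g t) (C := C * M) fun t ht => by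
    rw [Set.uIoc_of_le zero_le_one] at ht
    have ht' := Set.Ioc_subset_Icc_self ht
    exact (norm_smul_le _ _).trans (mul_le_mul (hC t ht') (hM t ht') (norm_nonneg _) hC₀)
  simpa using hbound

theorem exists_norm_eulerMaclaurin_sub_integral_le (m : ℕ) :
    ∃ C, 0 ≤ C ∧ ∀ {g : ℝ → F}, ContDiff ℝ (2 * m + 2) g → ∀ {h M : ℝ}, 0 ≤ h →
      (∀ t ∈ Set.Icc 0 h, ‖iteratedDeriv (2 * m + 2) g t‖ ≤ M) →
        ‖eulerMaclaurin m g h - ∫ t in 0..h, g t‖ ≤ C * M * h ^ (2 * m + 3) := by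
  obtain ⟨C, hC₀, hC⟩ := exists_norm_eulerMaclaurinRemainder_le (F := F) (k := 2 * m + 1)
    (by omega)
  refine ⟨C, hC₀, fun {g} hg {h M} hh hM => ?_⟩
  have hscaled : ContDiff ℝ (2 * m + 2) fun t => g (h * t) :=
    hg.comp (contDiff_const.mul contDiff_id)
  have hderiv : ∀ t ∈ Set.Icc (0 : ℝ) 1,
      ‖iteratedDeriv (2 * m + 2) (fun t => g (h * t)) t‖ ≤ h ^ (2 * m + 2) * M := by
    intro t ht
    rw [iteratedDeriv_comp_const_smul (by exact_mod_cast hg), norm_smul, norm_pow,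
      Real.norm_of_nonneg hh]
    gcongr
    exact hM _ ⟨mul_nonneg hh ht.1, mul_le_of_le_one_right hh ht.2⟩
  calc ‖eulerMaclaurin m g h - ∫ t in 0..h, g t‖
      = h * ‖eulerMaclaurinRemainder (2 * m + 1) fun t => g (h * t)‖ := by
        have hint : ∫ t in 0..h, g t = h • ∫ t in (0 : ℝ)..1, g (h * t) := by simp
        rw [eulerMaclaurin_eq_smul_comp_mul_left m (hg.of_le (by norm_cast; omega)), hint,
          ← smul_sub, eulerMaclaurin_one_sub_integral m (hscaled.of_le (by norm_cast; omega)),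
          norm_smul, Real.norm_of_nonneg hh]
    _ ≤ h * (C * (h ^ (2 * m + 2) * M)) := by
        gcongr
        exact hC (hscaled.of_le (by norm_cast)) hderiv
    _ = C * M * h ^ (2 * m + 3) := by ring

end EulerMaclaurin

section Jets

theorem exists_norm_iteratedDeriv_le_of_isCompact {E : Type*} [NormedAddCommGroup E]
    [NormedSpace ℝ E] {c : ℝ → E} {N : ℕ} (hc : ContDiff ℝ N c) {s : Set ℝ} (hs : IsCompact s) :
    ∃ M, ∀ t ∈ s, ∀ k ≤ N, ‖iteratedDeriv k c t‖ ≤ M := by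
  have hcont : Continuous fun t => fun k : Fin (N + 1) => iteratedDeriv k c t :=
    continuous_pi fun k => hc.continuous_iteratedDeriv k (by exact_mod_cast k.is_le)
  obtain ⟨M, hM⟩ := hs.exists_bound_of_continuousOn hcont.continuousOn
  exact ⟨M, fun t ht k hk =>
    (norm_le_pi_norm (fun k : Fin (N + 1) => iteratedDeriv k c t) ⟨k, by omega⟩).trans (hM t ht)⟩

/-- The lift `t ↦ (c t, ċ t)` of a curve to the tangent bundle `E × E` of a normed space `E`. -/
noncomputable def tangentLift {E : Type*} [NormedAddCommGroup E] [NormedSpace ℝ E] (c : ℝ → E)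
    (t : ℝ) : E × E :=
  (c t, deriv c t)

variable {E F : Type*} [NormedAddCommGroup E] [NormedSpace ℝ E]
  [NormedAddCommGroup F] [NormedSpace ℝ F]

theorem contDiff_tangentLift {c : ℝ → E} {n : WithTop ℕ∞} (hc : ContDiff ℝ (n + 1) c) :
    ContDiff ℝ n (tangentLift c) :=
  (hc.of_le le_self_add).prodMk hc.deriv'

theorem iteratedDeriv_tangentLift {c : ℝ → E} {k : ℕ} (hc : ContDiff ℝ (k + 1) c) (t : ℝ) :
    iteratedDeriv k (tangentLift c) t = (iteratedDeriv k c t, iteratedDeriv (k + 1) c t) := by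
  induction k generalizing t with
  | zero => simp [tangentLift]
  | succ k ih =>
    have hprev : iteratedDeriv k (tangentLift c) =
        fun t => (iteratedDeriv k c t, iteratedDeriv (k + 1) c t) :=
      funext (ih (hc.of_le (by norm_cast; omega)))
    rw [iteratedDeriv_succ, hprev]
    exact ((hasDerivAt_iteratedDeriv (hc.of_le (by norm_cast; omega)) t).prodMk
      (hasDerivAt_iteratedDeriv hc t)).deriv

theorem deriv_comp_eq_fderiv_comp_tangentLift {G : E → F} (hG : Differentiable ℝ G) {c : ℝ → E}
    (hc : Differentiable ℝ c) :
    deriv (G ∘ c) = (fun x : E × E => fderiv ℝ G x.1 x.2) ∘ tangentLift c :=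
  funext fun t => ((hG (c t)).hasFDerivAt.comp_hasDerivAt t (hc t).hasDerivAt).deriv

theorem contDiff_fderiv_apply_prod {G : E → F} {n : WithTop ℕ∞} (hG : ContDiff ℝ (n + 1) G) :
    ContDiff ℝ n fun x : E × E => fderiv ℝ G x.1 x.2 :=
  ((hG.fderiv_right le_rfl).comp contDiff_fst).clm_apply contDiff_snd

variable [FiniteDimensional ℝ E]

theorem exists_norm_sub_le_of_contDiff_of_norm_le {G : E → F} (hG : ContDiff ℝ 1 G) (M : ℝ) :
    ∃ C, 0 ≤ C ∧ ∀ {x y : E}, ‖x‖ ≤ M → ‖y‖ ≤ M → ‖G x - G y‖ ≤ C * ‖x - y‖ := by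
  have : ProperSpace E := FiniteDimensional.proper_real E
  obtain ⟨C, hC⟩ := hG.locallyLipschitz.locallyLipschitzOn.exists_lipschitzOnWith_of_compact
    (isCompact_closedBall (0 : E) M)
  exact ⟨C, C.2, fun hx hy => hC.norm_sub_le (by simpa using hx) (by simpa using hy)⟩

theorem exists_norm_iteratedDeriv_comp_sub_le {G : E → F} {N : ℕ} (hG : ContDiff ℝ (N + 1) G)
    (M : ℝ) :
    ∃ C, 0 ≤ C ∧ ∀ {a b : ℝ → E}, ContDiff ℝ N a → ContDiff ℝ N b → ∀ {t ε : ℝ},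
      (∀ k ≤ N, ‖iteratedDeriv k a t‖ ≤ M) → (∀ k ≤ N, ‖iteratedDeriv k b t‖ ≤ M) →
      (∀ k ≤ N, ‖iteratedDeriv k a t - iteratedDeriv k b t‖ ≤ ε) →
        ∀ k ≤ N, ‖iteratedDeriv k (G ∘ a) t - iteratedDeriv k (G ∘ b) t‖ ≤ C * ε := by
  induction N generalizing E with
  | zero =>
    obtain ⟨C, hC, hLip⟩ := exists_norm_sub_le_of_contDiff_of_norm_le (by simpa using hG) M
    refine ⟨C, hC, fun {a b} _ _ {t ε} ha hb hab k hk => ?_⟩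
    obtain rfl := Nat.le_zero.mp hk
    exact (hLip (ha 0 le_rfl) (hb 0 le_rfl)).trans (mul_le_mul_of_nonneg_left (hab 0 le_rfl) hC)
  | succ N ih =>
    obtain ⟨C₀, hC₀, hLip⟩ := exists_norm_sub_le_of_contDiff_of_norm_le (hG.of_le le_add_self) M
    -- `(G ∘ c)' = dG ∘ tangentLift c` with `dG (x, v) = fderiv ℝ G x v` on `E × E`, so the
    -- induction hypothesis applies to `dG` and the lifted curves.
    obtain ⟨C₁, _, hJet⟩ := ih (contDiff_fderiv_apply_prod (by exact_mod_cast hG))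
    refine ⟨max C₀ C₁, hC₀.trans (le_max_left _ _), fun {a b} ha hb {t ε} haM hbM hab k hk => ?_⟩
    have hε : 0 ≤ ε := (norm_nonneg _).trans (hab 0 (by omega))
    rcases k with _ | k
    · calc ‖G (a t) - G (b t)‖ ≤ C₀ * ‖a t - b t‖ := hLip (haM 0 (by omega)) (hbM 0 (by omega))
        _ ≤ max C₀ C₁ * ε := by
          gcongr
          · exact le_max_left _ _
          · exact hab 0 (by omega)
    have hlift : ∀ {c : ℝ → E}, ContDiff ℝ (N + 1 : ℕ) c → ∀ {j}, j ≤ N →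
        iteratedDeriv j (tangentLift c) t = (iteratedDeriv j c t, iteratedDeriv (j + 1) c t) :=
      fun hc _ hj => iteratedDeriv_tangentLift (hc.of_le (by norm_cast; omega)) t
    have hderiv : ∀ {c : ℝ → E}, ContDiff ℝ (N + 1 : ℕ) c →
        iteratedDeriv (k + 1) (G ∘ c) =
          iteratedDeriv k ((fun x : E × E => fderiv ℝ G x.1 x.2) ∘ tangentLift c) := fun hc => by
      rw [iteratedDeriv_succ', deriv_comp_eq_fderiv_comp_tangentLift
        (hG.differentiable (by simp)) (hc.differentiable (by simp))]
    rw [hderiv ha, hderiv hb]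
    refine (hJet (contDiff_tangentLift (by exact_mod_cast ha))
      (contDiff_tangentLift (by exact_mod_cast hb)) (fun j hj => ?_) (fun j hj => ?_)
      (fun j hj => ?_) k (by omega)).trans (mul_le_mul_of_nonneg_right (le_max_right _ _) hε)
    · rw [hlift ha hj]
      exact max_le (haM j (by omega)) (haM (j + 1) (by omega))
    · rw [hlift hb hj]
      exact max_le (hbM j (by omega)) (hbM (j + 1) (by omega))
    · rw [hlift ha hj, hlift hb hj]
      exact max_le (hab j (by omega)) (hab (j + 1) (by omega))

end Jets

section Composition

variable {E F : Type*} [NormedAddCommGroup E] [NormedSpace ℝ E] [FiniteDimensional ℝ E]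
  [NormedAddCommGroup F] [NormedSpace ℝ F]

theorem exists_norm_eulerMaclaurin_comp_sub_eulerMaclaurin_comp_le {m r : ℕ} {G : E → F}
    (hG : ContDiff ℝ (2 * m - 1 + 1 : ℕ) G) {c : ℝ → E} (hc : ContDiff ℝ (2 * m - 1 : ℕ) c)
    {γ : ℝ → ℝ → E} (hγ : ∀ h ∈ Set.Ioc (0 : ℝ) 1, ContDiff ℝ (2 * m - 1 : ℕ) (γ h)) {K : ℝ}
    (happrox : ∀ h ∈ Set.Ioc (0 : ℝ) 1, ∀ k ≤ 2 * m - 1, ∀ τ ∈ ({0, h} : Set ℝ),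
      ‖iteratedDeriv k (γ h) τ - iteratedDeriv k c τ‖ ≤ K * h ^ r) :
    ∃ C, 0 ≤ C ∧ ∀ h ∈ Set.Ioc (0 : ℝ) 1,
      ‖eulerMaclaurin m (G ∘ γ h) h - eulerMaclaurin m (G ∘ c) h‖ ≤ C * h ^ (r + 1) := by
  have hK : 0 ≤ K := by
    simpa using (norm_nonneg _).trans (happrox 1 (by simp) 0 (by omega) 0 (by simp))
  obtain ⟨M, hM⟩ := exists_norm_iteratedDeriv_le_of_isCompact hc (isCompact_Icc (a := 0) (b := 1))
  obtain ⟨J, hJ₀, hJ⟩ := exists_norm_iteratedDeriv_comp_sub_le (by exact_mod_cast hG) (M + K)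
  have hjets : ∀ h ∈ Set.Ioc (0 : ℝ) 1, ∀ k ≤ 2 * m - 1, ∀ τ ∈ ({0, h} : Set ℝ),
      ‖iteratedDeriv k (G ∘ γ h) τ - iteratedDeriv k (G ∘ c) τ‖ ≤ J * (K * h ^ r) := by
    intro h hh k hk τ hτ
    have hcM : ∀ j ≤ 2 * m - 1, ‖iteratedDeriv j c τ‖ ≤ M := by
      rcases hτ with rfl | rfl
      exacts [hM 0 ⟨le_rfl, zero_le_one⟩, hM τ ⟨hh.1.le, hh.2⟩]
    have hγM : ∀ j ≤ 2 * m - 1, ‖iteratedDeriv j (γ h) τ‖ ≤ M + K := fun j hj =>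
      calc ‖iteratedDeriv j (γ h) τ‖
          ≤ ‖iteratedDeriv j c τ‖ + ‖iteratedDeriv j (γ h) τ - iteratedDeriv j c τ‖ :=
            norm_le_norm_add_norm_sub' _ _
        _ ≤ M + K * h ^ r := add_le_add (hcM j hj) (happrox h hh j hj τ hτ)
        _ ≤ M + K := by
            gcongr
            exact mul_le_of_le_one_right hK (pow_le_one₀ hh.1.le hh.2)
    exact hJ (hγ h hh) hc hγM (fun j hj => (hcM j hj).trans (le_add_of_nonneg_right hK))
      (fun j hj => happrox h hh j hj τ hτ) k hk
  refine ⟨(1 + ∑ l ∈ Finset.Icc 1 m, |(bernoulli (2 * l) : ℝ) / Nat.factorial (2 * l)| * 2) *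
    (J * K), by positivity, fun h hh => ?_⟩
  exact (norm_eulerMaclaurin_sub_eulerMaclaurin_le m (Set.Ioc_subset_Icc_self hh)
    (hjets h hh)).trans_eq (by ring)

theorem exists_norm_eulerMaclaurin_comp_sub_integral_le [CompleteSpace F] {m r : ℕ}
    (hr : 2 * m + 2 ≤ r) {G : E → F} (hG : ContDiff ℝ (2 * m + 2) G) {c : ℝ → E}
    (hc : ContDiff ℝ (2 * m + 2) c) {γ : ℝ → ℝ → E}
    (hγ : ∀ h ∈ Set.Ioc (0 : ℝ) 1, ContDiff ℝ (2 * m - 1 : ℕ) (γ h)) {K : ℝ}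
    (happrox : ∀ h ∈ Set.Ioc (0 : ℝ) 1, ∀ k ≤ 2 * m - 1, ∀ τ ∈ ({0, h} : Set ℝ),
      ‖iteratedDeriv k (γ h) τ - iteratedDeriv k c τ‖ ≤ K * h ^ r) :
    ∃ C > 0, ∀ h ∈ Set.Ioc (0 : ℝ) 1,
      ‖eulerMaclaurin m (G ∘ γ h) h - ∫ t in 0..h, G (c t)‖ ≤ C * h ^ (2 * m + 3) := by
  have hGc : ContDiff ℝ (2 * m + 2) (G ∘ c) := hG.comp hc
  obtain ⟨P, hP₀, hperturb⟩ := exists_norm_eulerMaclaurin_comp_sub_eulerMaclaurin_comp_le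
    (hG.of_le (by norm_cast; omega)) (hc.of_le (by norm_cast; omega)) hγ happrox
  obtain ⟨Q, hQ₀, hquad⟩ := exists_norm_eulerMaclaurin_sub_integral_le (F := F) m
  obtain ⟨A, hA⟩ := isCompact_Icc.exists_bound_of_continuousOn (s := Set.Icc (0 : ℝ) 1)
    (hGc.continuous_iteratedDeriv (2 * m + 2) (by norm_cast)).continuousOn
  have hA₀ : 0 ≤ A := (norm_nonneg _).trans (hA 0 (by simp))
  refine ⟨P + Q * A + 1, by positivity, fun h hh => ?_⟩
  have hh₀ := hh.1
  calc ‖eulerMaclaurin m (G ∘ γ h) h - ∫ t in 0..h, G (c t)‖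
      ≤ P * h ^ (r + 1) + Q * A * h ^ (2 * m + 3) :=
        (norm_sub_le_norm_sub_add_norm_sub _ (eulerMaclaurin m (G ∘ c) h) _).trans
          (add_le_add (hperturb h hh)
            (hquad hGc hh₀.le fun t ht => hA t ⟨ht.1, ht.2.trans hh.2⟩))
    _ ≤ P * h ^ (2 * m + 3) + Q * A * h ^ (2 * m + 3) := by
        gcongr ?_ * ?_ + _
        exact pow_le_pow_of_le_one hh₀.le hh.2 (by omega)
    _ ≤ (P + Q * A + 1) * h ^ (2 * m + 3) := by linarith [pow_pos hh₀ (2 * m + 3)]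

end Composition

theorem iteratedDeriv_polynomial_eval {𝕜 : Type*} [NontriviallyNormedField 𝕜] (P : Polynomial 𝕜)
    (k : ℕ) :
    iteratedDeriv k (fun t => P.eval t) = fun t => (Polynomial.derivative^[k] P).eval t := by
  induction k generalizing P with
  | zero => simp
  | succ k ih =>
    have hderiv : deriv (fun t => P.eval t) = fun t => P.derivative.eval t :=
      funext fun _ => P.deriv
    rw [iteratedDeriv_succ', hderiv, ih, Function.iterate_succ_apply]

/-- The Lagrangian `L(x, v) = (1/2) μ v² - V(x)` as a function on the phase space `ℝ × ℝ`. -/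
noncomputable def mechanicalLagrangian (μ : ℝ) (V : ℝ → ℝ) (x : ℝ × ℝ) : ℝ :=
  1 / 2 * μ * x.2 ^ 2 - V x.1

theorem contDiff_mechanicalLagrangian {V : ℝ → ℝ} {n : WithTop ℕ∞} (hV : ContDiff ℝ n V) (μ : ℝ) :
    ContDiff ℝ n (mechanicalLagrangian μ V) :=
  (contDiff_const.mul (contDiff_snd.pow 2)).sub (hV.comp contDiff_fst)

theorem lagrangianAlong_eq_comp_tangentLift (μ : ℝ) (V : ℝ → ℝ) (P : Polynomial ℝ) :
    lagrangianAlong μ V P = mechanicalLagrangian μ V ∘ tangentLift fun t => P.eval t := by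
  ext t
  simp [lagrangianAlong, mechanicalLagrangian, tangentLift]

theorem discreteLagrangianEM_eq_eulerMaclaurin (n : ℕ) (μ : ℝ) (V : ℝ → ℝ)
    (qd : ℝ → Polynomial ℝ) (h : ℝ) :
    discreteLagrangianEM n μ V qd h =
      eulerMaclaurin (n / 2) (mechanicalLagrangian μ V ∘ tangentLift fun t => (qd h).eval t) h := by
  rw [← lagrangianAlong_eq_comp_tangentLift]
  rfl

theorem prolongation_collocation_variational_order_general {n r : ℕ} (hn : 1 ≤ n)
    (hr : 2 * (n / 2) + 2 ≤ r) {V : ℝ → ℝ} (hV : ContDiff ℝ (2 * (n / 2) + 2 : ℕ) V) (μ : ℝ)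
    {q : ℝ → ℝ} (hq : ContDiff ℝ (2 * (n / 2) + 3 : ℕ) q) {qd : ℝ → Polynomial ℝ}
    (hbc0 : ∀ h ∈ Set.Ioc (0 : ℝ) 1, (qd h).eval 0 = q 0)
    (hbc1 : ∀ h ∈ Set.Ioc (0 : ℝ) 1, (qd h).eval h = q h) {K : ℝ}
    (happrox : ∀ h ∈ Set.Ioc (0 : ℝ) 1, ∀ j : ℕ, 1 ≤ j → j ≤ n → ∀ τ ∈ ({0, h} : Set ℝ),
      |(Polynomial.derivative^[j] (qd h)).eval τ - iteratedDeriv j q τ| ≤ K * h ^ r) :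
    ∃ C > 0, ∀ h ∈ Set.Ioc (0 : ℝ) 1,
      |discreteLagrangianEM n μ V qd h -
          ∫ t in (0 : ℝ)..h, (1 / 2 * μ * (deriv q t) ^ 2 - V (q t))| ≤
        C * h ^ (2 * (n / 2) + 3) := by
  have hsmooth : ∀ (h : ℝ) (N : ℕ), ContDiff ℝ N fun t => (qd h).eval t := fun h N => by
    simpa using (qd h).contDiff_aeval (𝕜 := ℝ) N
  have hcurve : ∀ h ∈ Set.Ioc (0 : ℝ) 1, ∀ j ≤ n, ∀ τ ∈ ({0, h} : Set ℝ),
      ‖iteratedDeriv j (fun t => (qd h).eval t) τ - iteratedDeriv j q τ‖ ≤ K * h ^ r := by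
    intro h hh j hj τ hτ
    rcases Nat.eq_zero_or_pos j with rfl | hj₀
    · have hendpoint : (qd h).eval τ = q τ := by
        rcases hτ with rfl | rfl
        exacts [hbc0 h hh, hbc1 τ hh]
      simpa [hendpoint] using (abs_nonneg _).trans (happrox h hh 1 le_rfl hn τ hτ)
    · rw [iteratedDeriv_polynomial_eval]
      exact happrox h hh j hj₀ hj τ hτ
  have hlift : ∀ h ∈ Set.Ioc (0 : ℝ) 1, ∀ k ≤ 2 * (n / 2) - 1, ∀ τ ∈ ({0, h} : Set ℝ),
      ‖iteratedDeriv k (tangentLift fun t => (qd h).eval t) τ -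
        iteratedDeriv k (tangentLift q) τ‖ ≤ K * h ^ r := by
    intro h hh k hk τ hτ
    rw [iteratedDeriv_tangentLift (hsmooth h (k + 1)),
      iteratedDeriv_tangentLift (hq.of_le (by norm_cast; omega))]
    exact max_le (hcurve h hh k (by omega) τ hτ) (hcurve h hh (k + 1) (by omega) τ hτ)
  simp only [discreteLagrangianEM_eq_eulerMaclaurin]
  exact exists_norm_eulerMaclaurin_comp_sub_integral_le hr
    (contDiff_mechanicalLagrangian (by exact_mod_cast hV) μ)
    (contDiff_tangentLift (by exact_mod_cast hq))
    (fun h _ => contDiff_tangentLift (hsmooth h _)) hlift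

/-- **Variational order of the prolongation-collocation discrete Lagrangian.**
Let `n ≥ 3`, `L(x,v) = (1/2) μ v² - V(x)` with `V` smooth with all derivatives bounded, `μ > 0`,
and let `q` be a smooth solution of `q̈ = f(q)` (`f = -V'/μ`) with all derivatives bounded.
If `q_d^h` (for `0 < h ≤ 1`) are polynomials of degree at most `2n - 1` with the boundary and
prolongation-collocation conditions at `{0, h}`, whose derivatives of orders `1, …, n` at the
endpoints approximate those of `q` to within `K h^{2n-1}`, then the prolongation-collocation
discrete Lagrangian approximates the exact discrete Lagrangian
`L_d^E(q(0), q(h), h) = ∫_0^h L(q(t), q̇(t)) dt` to order `h^{2⌊n/2⌋ + 3}`. -/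
theorem prolongation_collocation_variational_order
    (n : ℕ) (hn : 3 ≤ n)
    (V : ℝ → ℝ) (hV : ContDiff ℝ (⊤ : ℕ∞) V)
    (hVb : ∀ k : ℕ, ∃ M : ℝ, ∀ x : ℝ, |iteratedDeriv k V x| ≤ M)
    (μ : ℝ) (hμ : 0 < μ)
    (q : ℝ → ℝ) (hq : ContDiff ℝ (⊤ : ℕ∞) q)
    (hode : ∀ t : ℝ, iteratedDeriv 2 q t = -deriv V (q t) / μ)
    (hqb : ∀ k : ℕ, ∃ M : ℝ, ∀ t : ℝ, |iteratedDeriv k q t| ≤ M)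
    (qd : ℝ → Polynomial ℝ)
    (hdeg : ∀ h ∈ Set.Ioc (0 : ℝ) 1, (qd h).natDegree ≤ 2 * n - 1)
    (hbc0 : ∀ h ∈ Set.Ioc (0 : ℝ) 1, (qd h).eval 0 = q 0)
    (hbc1 : ∀ h ∈ Set.Ioc (0 : ℝ) 1, (qd h).eval h = q h)
    (hcol : ∀ h ∈ Set.Ioc (0 : ℝ) 1, ∀ j : ℕ, 2 ≤ j → j ≤ n → ∀ τ ∈ ({0, h} : Set ℝ),
      (Polynomial.derivative^[j] (qd h)).eval τ =
        prolong (fun x => -deriv V x / μ) (j - 2) ((qd h).eval τ)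
          ((Polynomial.derivative (qd h)).eval τ))
    (K : ℝ) (hK : 0 < K)
    (happrox : ∀ h ∈ Set.Ioc (0 : ℝ) 1, ∀ j : ℕ, 1 ≤ j → j ≤ n → ∀ τ ∈ ({0, h} : Set ℝ),
      |(Polynomial.derivative^[j] (qd h)).eval τ - iteratedDeriv j q τ| ≤ K * h ^ (2 * n - 1)) :
    ∃ C > 0, ∃ h₀ ∈ Set.Ioc (0 : ℝ) 1, ∀ h : ℝ, 0 < h → h ≤ h₀ →
      |discreteLagrangianEM n μ V qd h -
          ∫ t in (0:ℝ)..h, (1 / 2 * μ * (deriv q t) ^ 2 - V (q t))| ≤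
        C * h ^ (2 * (n / 2) + 3) := by
  obtain ⟨C, hC, hbound⟩ := prolongation_collocation_variational_order_general (by omega)
    (by omega) (contDiff_infty.mp hV _) μ (contDiff_infty.mp hq _) hbc0 hbc1 happrox
  exact ⟨C, hC, 1, by simp, fun h h₀ h₁ => hbound h ⟨h₀, h₁⟩⟩
end
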